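/- (Jackson's Theorem.) If f: [−1,1] → ℝ is Lipschitz continuous with constant L, then for every positive integer M there exists a polynomial p of degree at most M such that sup_{x ∈ [−1,1]} |f(x) − p(x)| ≤ 6L/M. -/

import Mathlib

/-!
Put `x = cos θ` and average the even periodic function `f ∘ cos` against a nonnegative
trigonometric kernel `K` of degree `M`: the average `∫ f (cos (θ - t)) K t / ∫ K` is a polynomial of
degree at most `M` in `cos θ`. By the inequality of arithmetic and geometric means,
`|cos θ - cos (θ - t)| ≤ h / 2 + (1 - cos t) / h`, so the error only depends on the ratio
`∫ K t cos t / ∫ K`. For `K t = |∑ aₖ exp (i k t)|²` that ratio is a Rayleigh quotient of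
half the adjacency matrix of a path, and the top eigenvector `aₖ = sin (k π / (M + 2))` makes it
`cos (π / (M + 2))`. Taking `h = π / (M + 2)` bounds the error by `L π / (M + 2)`.
-/

section JacksonTheorem

open Real Set MeasureTheory
open Polynomial (C)
open Polynomial.Chebyshev (T)
open scoped NNReal

lemma integral_cos_int_mul (m : ℤ) :
    ∫ t in -π..π, cos (m * t) = if m = 0 then 2 * π else 0 := by
  split_ifs with hm
  · simp only [hm, Int.cast_zero, zero_mul, cos_zero, intervalIntegral.integral_const, smul_eq_mul]
    ring
  · rw [intervalIntegral.integral_comp_mul_left cos (Int.cast_ne_zero.mpr hm), integral_cos,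
      mul_neg, sin_neg, sin_int_mul_pi, neg_zero, sub_zero, smul_zero]

lemma integral_cos_int_mul_mul_cos_int_mul (m n : ℤ) :
    ∫ t in -π..π, cos (m * t) * cos (n * t) =
      π * ((if n = m then 1 else 0) + if n = -m then 1 else 0) := by
  have product_to_sum (t : ℝ) : cos (m * t) * cos (n * t) =
      cos ((n - m : ℤ) * t) / 2 + cos ((n + m : ℤ) * t) / 2 := by
    push_cast
    rw [sub_mul, add_mul, cos_sub, cos_add]
    ring
  simp_rw [product_to_sum]
  rw [intervalIntegral.integral_add (Continuous.intervalIntegrable (by fun_prop) _ _)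
      (Continuous.intervalIntegrable (by fun_prop) _ _), intervalIntegral.integral_div,
    intervalIntegral.integral_div, integral_cos_int_mul, integral_cos_int_mul]
  simp only [sub_eq_zero, ← eq_neg_iff_add_eq_zero]
  split_ifs <;> ring

/-- The nonnegative trigonometric polynomial `|∑ k ∈ s, a k * exp (i k t)|²`, used as a convolution
kernel on the circle. Only the values of `a` on `s` matter. -/
noncomputable def normSqTrigPoly (s : Finset ℤ) (a : ℤ → ℝ) (t : ℝ) : ℝ :=
  ‖∑ k ∈ s, (a k : ℂ) * Complex.exp ((k * t : ℝ) * Complex.I)‖ ^ 2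

section NormSqTrigPoly

variable (s : Finset ℤ) (a : ℤ → ℝ)

lemma normSqTrigPoly_nonneg (t : ℝ) : 0 ≤ normSqTrigPoly s a t :=
  sq_nonneg _

lemma continuous_normSqTrigPoly : Continuous (normSqTrigPoly s a) := by
  unfold normSqTrigPoly
  fun_prop

lemma normSqTrigPoly_eq_sum_sum_cos (t : ℝ) :
    normSqTrigPoly s a t = ∑ k ∈ s, ∑ l ∈ s, a k * a l * cos ((k - l : ℤ) * t) := by
  simp only [normSqTrigPoly, Complex.sq_norm, Complex.normSq_apply, Complex.re_sum, Complex.im_sum,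
    Complex.re_ofReal_mul, Complex.im_ofReal_mul, Complex.exp_ofReal_mul_I_re,
    Complex.exp_ofReal_mul_I_im, Finset.sum_mul_sum, ← Finset.sum_add_distrib]
  refine Finset.sum_congr rfl fun k _ ↦ Finset.sum_congr rfl fun l _ ↦ ?_
  rw [Int.cast_sub, sub_mul, cos_sub]
  ring

lemma integral_mul_normSqTrigPoly {g : ℝ → ℝ} {x y : ℝ} (hg : IntervalIntegrable g volume x y) :
    ∫ t in x..y, g t * normSqTrigPoly s a t =
      ∑ k ∈ s, ∑ l ∈ s, a k * a l * ∫ t in x..y, g t * cos ((k - l : ℤ) * t) := by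
  have integrable (k l : ℤ) : IntervalIntegrable
      (fun t ↦ a k * a l * (g t * cos ((k - l : ℤ) * t))) volume x y :=
    (hg.mul_continuousOn (by fun_prop)).const_mul _
  have integrable_sum (k : ℤ) : IntervalIntegrable
      (fun t ↦ ∑ l ∈ s, a k * a l * (g t * cos ((k - l : ℤ) * t))) volume x y := by
    simpa only [Finset.sum_fn] using IntervalIntegrable.sum s fun l _ ↦ integrable k l
  simp_rw [normSqTrigPoly_eq_sum_sum_cos, Finset.mul_sum, mul_left_comm (g _)]
  rw [intervalIntegral.integral_finsetSum fun k _ ↦ integrable_sum k]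
  refine Finset.sum_congr rfl fun k _ ↦ ?_
  rw [intervalIntegral.integral_finsetSum fun l _ ↦ integrable k l]
  simp_rw [intervalIntegral.integral_const_mul]

variable {s a} in
lemma integral_cos_int_mul_mul_normSqTrigPoly {m : ℤ}
    (hadd : ∀ k ∈ s, k + m ∉ s → a (k + m) = 0) (hsub : ∀ k ∈ s, k - m ∉ s → a (k - m) = 0) :
    ∫ t in -π..π, cos (m * t) * normSqTrigPoly s a t =
      π * ∑ k ∈ s, a k * (a (k + m) + a (k - m)) := by
  rw [integral_mul_normSqTrigPoly s a (Continuous.intervalIntegrable (by fun_prop) _ _),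
    Finset.mul_sum]
  refine Finset.sum_congr rfl fun k hk ↦ ?_
  have sum_ite_sub (j : ℤ) (hj : k - j ∉ s → a (k - j) = 0) :
      ∑ l ∈ s, a l * (if k - l = j then 1 else 0) = a (k - j) := by
    simp only [sub_eq_iff_comm, mul_ite, mul_one, mul_zero, Finset.sum_ite_eq]
    exact ite_eq_left_iff.mpr fun h ↦ (hj h).symm
  have sum_sub := sum_ite_sub m (hsub k hk)
  have sum_add := sum_ite_sub (-m) (by simpa only [sub_neg_eq_add] using hadd k hk)
  rw [sub_neg_eq_add] at sum_add
  rw [← sum_add, ← sum_sub, ← Finset.sum_add_distrib, Finset.mul_sum, Finset.mul_sum]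
  refine Finset.sum_congr rfl fun l _ ↦ ?_
  rw [integral_cos_int_mul_mul_cos_int_mul]
  ring

lemma integral_normSqTrigPoly :
    ∫ t in -π..π, normSqTrigPoly s a t = 2 * π * ∑ k ∈ s, a k ^ 2 := by
  have h := integral_cos_int_mul_mul_normSqTrigPoly (s := s) (a := a) (m := 0)
    (fun k hk h ↦ absurd hk (by simpa using h)) (fun k hk h ↦ absurd hk (by simpa using h))
  simp only [Int.cast_zero, zero_mul, cos_zero, one_mul, add_zero, sub_zero] at h
  rw [h, Finset.mul_sum, Finset.mul_sum]
  exact Finset.sum_congr rfl fun k _ ↦ by ring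

end NormSqTrigPoly

/-- The (unnormalised) Fejér–Korovkin kernel of degree `n - 2`: among the trigonometric polynomials
`|∑ k ∈ (0, n), a k * exp (i k t)|²` of integral one, a multiple of it maximises the first cosine
coefficient. -/
noncomputable def fejerKorovkin (n : ℕ) : ℝ → ℝ :=
  normSqTrigPoly (Finset.Ioo 0 (n : ℤ)) fun k ↦ sin (k * (π / n))

lemma integral_fejerKorovkin_pos {n : ℕ} (hn : 2 ≤ n) : 0 < ∫ t in -π..π, fejerKorovkin n t := by
  have hn' : (2 : ℝ) ≤ n := mod_cast hn
  have sin_pos : 0 < sin (((1 : ℤ) : ℝ) * (π / n)) := by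
    rw [Int.cast_one, one_mul]
    exact sin_pos_of_pos_of_lt_pi (by positivity) (div_lt_self pi_pos (by linarith))
  unfold fejerKorovkin
  rw [integral_normSqTrigPoly]
  refine mul_pos two_pi_pos (Finset.sum_pos' (fun k _ ↦ sq_nonneg _) ⟨1, ?_, by positivity⟩)
  simp only [Finset.mem_Ioo]
  lia

lemma integral_cos_mul_fejerKorovkin (n : ℕ) :
    ∫ t in -π..π, cos t * fejerKorovkin n t = cos (π / n) * ∫ t in -π..π, fejerKorovkin n t := by
  set a : ℤ → ℝ := fun k ↦ sin (k * (π / n))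
  have ha_zero : a 0 = 0 := by simp [a]
  have ha_n : a n = 0 := by
    rcases eq_or_ne n 0 with rfl | hn
    · simp [a]
    · simp [a, mul_div_cancel₀ π (Nat.cast_ne_zero.mpr hn)]
  have ha_rec (k : ℤ) : a (k + 1) + a (k - 1) = 2 * cos (π / n) * a k := by
    simp only [a, Int.cast_add, Int.cast_sub, Int.cast_one, add_mul, sub_mul, one_mul, sin_add,
      sin_sub]
    ring
  have h := integral_cos_int_mul_mul_normSqTrigPoly (s := Finset.Ioo 0 (n : ℤ)) (a := a) (m := 1)
    (fun k hk hk' ↦ by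
      rwa [show k + 1 = n by simp only [Finset.mem_Ioo] at hk hk'; lia])
    (fun k hk hk' ↦ by
      rwa [show k - 1 = 0 by simp only [Finset.mem_Ioo] at hk hk'; lia])
  simp only [Int.cast_one, one_mul, ha_rec] at h
  unfold fejerKorovkin
  rw [h, integral_normSqTrigPoly, Finset.mul_sum, Finset.mul_sum, Finset.mul_sum]
  exact Finset.sum_congr rfl fun k _ ↦ by ring

section Symmetry

variable {E : Type*} [NormedAddCommGroup E] [NormedSpace ℝ E] {u : ℝ → E} {c : ℝ}

lemma intervalIntegral_eq_zero_of_odd (hu : u.Odd) : ∫ t in -c..c, u t = 0 := by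
  have h : ∫ t in -c..c, u (-t) = ∫ t in -c..c, u t := by
    rw [intervalIntegral.integral_comp_neg, neg_neg]
  simp_rw [hu _, intervalIntegral.integral_neg] at h
  have := IsAddTorsionFree.of_isTorsionFree ℝ E
  exact neg_eq_self.mp h

lemma intervalIntegral_comp_sub_left_of_periodic (hu : u.Periodic (2 * c)) (d : ℝ) :
    ∫ t in -c..c, u (d - t) = ∫ t in -c..c, u t := by
  rw [intervalIntegral.integral_comp_sub_left]
  convert! hu.intervalIntegral_add_eq (d - c) (-c) using 2 <;> ring

end Symmetry

section Convolution

variable {g : ℝ → ℝ} (hg : IntervalIntegrable g volume (-π) π) (hg_even : g.Even)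
  (hg_per : g.Periodic (2 * π))
include hg hg_even hg_per

lemma integral_comp_sub_mul_cos_int_mul (m : ℤ) (θ : ℝ) :
    ∫ t in -π..π, g (θ - t) * cos (m * t) =
      (∫ t in -π..π, g t * cos (m * t)) * (T ℝ m).eval (cos θ) := by
  have periodic : (fun t ↦ g t * cos (m * (θ - t))).Periodic (2 * π) := fun t ↦ by
    simp only [hg_per t]
    rw [← sub_sub, mul_sub (m : ℝ) (θ - t), cos_sub_int_mul_two_pi]
  have odd : (fun t ↦ g t * sin (m * t)).Odd := fun t ↦ by
    simp only [hg_even t, mul_neg, sin_neg]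
  calc ∫ t in -π..π, g (θ - t) * cos (m * t)
      = ∫ t in -π..π, g t * cos (m * (θ - t)) := by
        rw [← intervalIntegral_comp_sub_left_of_periodic periodic θ]
        simp only [sub_sub_cancel]
    _ = ∫ t in -π..π, (g t * cos (m * t) * cos (m * θ) + g t * sin (m * t) * sin (m * θ)) := by
        congr 1 with t
        rw [mul_sub, cos_sub]
        ring
    _ = (∫ t in -π..π, g t * cos (m * t)) * cos (m * θ) := by
        rw [intervalIntegral.integral_add
            ((hg.mul_continuousOn (by fun_prop)).mul_const _)
            ((hg.mul_continuousOn (by fun_prop)).mul_const _),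
          intervalIntegral.integral_mul_const, intervalIntegral.integral_mul_const,
          intervalIntegral_eq_zero_of_odd odd, zero_mul, add_zero]
    _ = (∫ t in -π..π, g t * cos (m * t)) * (T ℝ m).eval (cos θ) := by
        rw [Polynomial.Chebyshev.T_real_cos]

lemma exists_natDegree_le_eval_cos_eq_integral_mul_normSqTrigPoly {s : Finset ℤ} (a : ℤ → ℝ) {d : ℕ}
    (hs : ∀ k ∈ s, ∀ l ∈ s, (k - l).natAbs ≤ d) :
    ∃ p : Polynomial ℝ, p.natDegree ≤ d ∧
      ∀ θ, p.eval (cos θ) = ∫ t in -π..π, g (θ - t) * normSqTrigPoly s a t := by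
  refine ⟨∑ k ∈ s, ∑ l ∈ s,
    C (a k * a l * ∫ t in -π..π, g t * cos ((k - l : ℤ) * t)) * T ℝ (k - l), ?_, fun θ ↦ ?_⟩
  · refine Polynomial.natDegree_sum_le_of_forall_le _ _ fun k hk ↦
      Polynomial.natDegree_sum_le_of_forall_le _ _ fun l hl ↦
        (Polynomial.natDegree_C_mul_le _ _).trans ?_
    rw [Polynomial.Chebyshev.natDegree_T]
    exact hs k hk l hl
  · have integrable : IntervalIntegrable (fun t ↦ g (θ - t)) volume (-π) π := by
      have h := hg_per.intervalIntegrable (t := -π) two_pi_pos.ne'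
        (by convert! hg using 1; ring) (θ - -π) (θ - π)
      simpa using h.comp_sub_left θ
    simp only [integral_mul_normSqTrigPoly s a integrable, Polynomial.eval_finsetSum,
      Polynomial.eval_mul, Polynomial.eval_C,
      integral_comp_sub_mul_cos_int_mul hg hg_even hg_per, mul_assoc]

end Convolution

lemma abs_cos_sub_cos_le_div_two_add_div (x y : ℝ) {h : ℝ} (hh : 0 < h) :
    |cos x - cos y| ≤ h / 2 + (1 - cos (x - y)) / h := by
  have chord_sq : (cos x - cos y) ^ 2 ≤ 2 * (1 - cos (x - y)) := by
    rw [cos_sub]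
    linarith [sin_sq_add_cos_sq x, sin_sq_add_cos_sq y, sq_nonneg (sin x - sin y)]
  have am_gm : 2 * |cos x - cos y| * h ≤ (cos x - cos y) ^ 2 + h ^ 2 := by
    rw [← sq_abs (cos x - cos y)]
    exact two_mul_le_add_sq _ _
  rw [div_add_div _ _ two_ne_zero hh.ne', le_div_iff₀ (by positivity)]
  linarith

section Lipschitz

variable {f : ℝ → ℝ} {L : ℝ≥0} (hf : LipschitzOnWith L f (Icc (-1) 1))
include hf

lemma continuous_comp_cos_of_lipschitzOnWith : Continuous fun t ↦ f (cos t) :=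
  hf.continuousOn.comp_continuous continuous_cos cos_mem_Icc

lemma abs_comp_cos_sub_comp_cos_sub_le (θ t : ℝ) {h : ℝ} (hh : 0 < h) :
    |f (cos θ) - f (cos (θ - t))| ≤ L * (h / 2 + (1 - cos t) / h) := by
  calc |f (cos θ) - f (cos (θ - t))|
      ≤ L * |cos θ - cos (θ - t)| := hf.dist_le_mul _ (cos_mem_Icc _) _ (cos_mem_Icc _)
    _ ≤ L * (h / 2 + (1 - cos (θ - (θ - t))) / h) := by
        gcongr
        exact abs_cos_sub_cos_le_div_two_add_div _ _ hh
    _ = L * (h / 2 + (1 - cos t) / h) := by rw [sub_sub_cancel]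

lemma abs_mul_integral_sub_integral_comp_cos_mul_le {K : ℝ → ℝ} {x y : ℝ} (hxy : x ≤ y)
    (hK : IntervalIntegrable K volume x y) (hK_nonneg : ∀ t ∈ Ioc x y, 0 ≤ K t) {h : ℝ}
    (hh : 0 < h) (θ : ℝ) :
    |f (cos θ) * (∫ t in x..y, K t) - ∫ t in x..y, f (cos (θ - t)) * K t| ≤
      L * (h / 2 * (∫ t in x..y, K t) +
        ((∫ t in x..y, K t) - ∫ t in x..y, cos t * K t) / h) := by
  have f_cos_integrable : IntervalIntegrable (fun t ↦ f (cos (θ - t)) * K t) volume x y :=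
    have h := (continuous_comp_cos_of_lipschitzOnWith hf).comp (continuous_sub_left θ)
    hK.continuousOn_mul h.continuousOn
  have cos_integrable : IntervalIntegrable (fun t ↦ cos t * K t) volume x y :=
    hK.continuousOn_mul (by fun_prop)
  have defect_integrable : IntervalIntegrable (fun t ↦ (K t - cos t * K t) / h) volume x y :=
    (hK.sub cos_integrable).div_const h
  have pointwise (t : ℝ) (ht : t ∈ Ioc x y) :
      ‖f (cos θ) * K t - f (cos (θ - t)) * K t‖ ≤
        L * (h / 2 * K t + (K t - cos t * K t) / h) := by
    rw [norm_eq_abs, ← sub_mul, abs_mul, abs_of_nonneg (hK_nonneg t ht)]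
    calc |f (cos θ) - f (cos (θ - t))| * K t
        ≤ L * (h / 2 + (1 - cos t) / h) * K t :=
          mul_le_mul_of_nonneg_right (abs_comp_cos_sub_comp_cos_sub_le hf θ t hh) (hK_nonneg t ht)
      _ = L * (h / 2 * K t + (K t - cos t * K t) / h) := by ring
  have integrated := intervalIntegral.norm_integral_le_of_norm_le hxy
    (ae_of_all _ pointwise) (((hK.const_mul _).add defect_integrable).const_mul _)
  rwa [intervalIntegral.integral_sub (hK.const_mul _) f_cos_integrable,
    intervalIntegral.integral_const_mul, intervalIntegral.integral_const_mul,
    intervalIntegral.integral_add (hK.const_mul _) defect_integrable,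
    intervalIntegral.integral_const_mul, intervalIntegral.integral_div,
    intervalIntegral.integral_sub hK cos_integrable] at integrated

lemma abs_mul_integral_fejerKorovkin_sub_integral_le {n : ℕ} (hn : n ≠ 0) (θ : ℝ) :
    |f (cos θ) * (∫ t in -π..π, fejerKorovkin n t) -
        ∫ t in -π..π, f (cos (θ - t)) * fejerKorovkin n t| ≤
      L * (π / n) * ∫ t in -π..π, fejerKorovkin n t := by
  set I := ∫ t in -π..π, fejerKorovkin n t with hI
  set h := π / n with h_def
  have hh : 0 < h := by positivity
  have I_nonneg : 0 ≤ I := intervalIntegral.integral_nonneg (by linarith [pi_pos])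
    fun t _ ↦ normSqTrigPoly_nonneg _ _ t
  have one_sub_cos_div_le : (1 - cos h) / h ≤ h / 2 := by
    rw [div_le_iff₀ hh]
    linarith [one_sub_sq_div_two_le_cos (x := h)]
  calc _ ≤ L * (h / 2 * I + (I - cos h * I) / h) := by
        rw [h_def, hI, ← integral_cos_mul_fejerKorovkin]
        exact abs_mul_integral_sub_integral_comp_cos_mul_le hf (by linarith [pi_pos])
          ((continuous_normSqTrigPoly _ _).intervalIntegrable _ _)
          (fun t _ ↦ normSqTrigPoly_nonneg _ _ t) hh θ
    _ = L * (h / 2 + (1 - cos h) / h) * I := by ring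
    _ ≤ L * (h / 2 + h / 2) * I := by gcongr
    _ = L * h * I := by rw [add_halves]

theorem exists_natDegree_le_abs_sub_eval_le_mul_pi_div (M : ℕ) :
    ∃ p : Polynomial ℝ, p.natDegree ≤ M ∧
      ∀ x ∈ Icc (-1 : ℝ) 1, |f x - p.eval x| ≤ L * (π / (M + 2 : ℕ)) := by
  obtain ⟨q, hq_deg, hq⟩ := exists_natDegree_le_eval_cos_eq_integral_mul_normSqTrigPoly
    (g := fun t ↦ f (cos t)) ((continuous_comp_cos_of_lipschitzOnWith hf).intervalIntegrable _ _)
    (fun t ↦ by simp only [cos_neg]) (fun t ↦ by simp only [cos_add_two_pi])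
    (s := Finset.Ioo 0 ((M + 2 : ℕ) : ℤ)) (fun k ↦ sin (k * (π / (M + 2 : ℕ)))) (d := M)
    (fun k hk l hl ↦ by simp only [Finset.mem_Ioo] at hk hl; lia)
  set I := ∫ t in -π..π, fejerKorovkin (M + 2) t
  have hI : 0 < I := integral_fejerKorovkin_pos (by lia)
  refine ⟨C I⁻¹ * q, (Polynomial.natDegree_C_mul_le _ _).trans hq_deg, fun x hx ↦ ?_⟩
  obtain ⟨θ, rfl⟩ : ∃ θ, cos θ = x := ⟨arccos x, cos_arccos hx.1 hx.2⟩
  have error_eq : f (cos θ) - (C I⁻¹ * q).eval (cos θ) = (f (cos θ) * I - q.eval (cos θ)) / I := by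
    rw [Polynomial.eval_mul, Polynomial.eval_C]
    field_simp
  rw [error_eq, abs_div, abs_of_pos hI, div_le_iff₀ hI, hq]
  exact abs_mul_integral_fejerKorovkin_sub_integral_le hf (by lia) θ

end Lipschitz

end JacksonTheorem

/-- **Jackson's theorem.** If `f : [−1,1] → ℝ` is Lipschitz with constant `L`, then for
every positive integer `M` there is a polynomial `p` of degree at most `M` with
`sup_{x ∈ [−1,1]} |f x − p x| ≤ 6 L / M`. -/
theorem jackson_theorem (f : ℝ → ℝ) (L : ℝ)
    (hf : ∀ x ∈ Set.Icc (-1 : ℝ) 1, ∀ y ∈ Set.Icc (-1 : ℝ) 1, |f x - f y| ≤ L * |x - y|)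
    (M : ℕ) (hM : 0 < M) :
    ∃ p : Polynomial ℝ, p.natDegree ≤ M ∧
      ∀ x ∈ Set.Icc (-1 : ℝ) 1, |f x - p.eval x| ≤ 6 * L / M := by
  have hL : 0 ≤ L := by
    have h := (abs_nonneg _).trans (hf 1 (by simp) 0 (by simp))
    simpa using h
  lift L to NNReal using hL
  obtain ⟨p, hp_deg, hp⟩ :=
    exists_natDegree_le_abs_sub_eval_le_mul_pi_div (LipschitzOnWith.of_dist_le_mul hf) M
  refine ⟨p, hp_deg, fun x hx ↦ (hp x hx).trans ?_⟩
  calc (L : ℝ) * (Real.pi / (M + 2 : ℕ)) ≤ L * (6 / M) := by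
        gcongr
        · linarith [Real.pi_le_four]
        · lia
    _ = 6 * L / M := by ring
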